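/- Let (E,𝒞,r) be a semimatroid and let X ⊆ Y be flats of 𝒞. Then the Möbius function μ of the poset ℒ(𝒞) of flats satisfies μ(X,Y) = Σ_Z (−1)^{|Z \ X|}, where the sum ranges over all central sets Z ∈ 𝒞 with X ⊆ Z ⊆ Y and cl(Z) = Y. -/

import Mathlib

/-- A semimatroid on a finite ground set `E`: a nonempty, subset-closed collection `C`
of "central" subsets of `E`, together with a rank function `r` satisfying (SR1)-(SR5). -/
structure Semimatroid (E : Type*) [DecidableEq E] [Fintype E] where
  C : Finset (Finset E)
  r : Finset E → ℕ
  C_nonempty : C.Nonempty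
  mem_of_subset : ∀ ⦃X Y : Finset E⦄, X ∈ C → Y ⊆ X → Y ∈ C
  r_le_card : ∀ ⦃X : Finset E⦄, X ∈ C → r X ≤ X.card
  r_mono : ∀ ⦃X Y : Finset E⦄, X ∈ C → Y ∈ C → X ⊆ Y → r X ≤ r Y
  submodular : ∀ ⦃X Y : Finset E⦄, X ∈ C → Y ∈ C → X ∪ Y ∈ C →
    r (X ∩ Y) + r (X ∪ Y) ≤ r X + r Y
  union_mem : ∀ ⦃X Y : Finset E⦄, X ∈ C → Y ∈ C → r X = r (X ∩ Y) → X ∪ Y ∈ C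
  augment : ∀ ⦃X Y : Finset E⦄, X ∈ C → Y ∈ C → r X < r Y →
    ∃ e ∈ Y \ X, insert e X ∈ C

namespace Semimatroid

variable {E : Type*} [DecidableEq E] [Fintype E] (S : Semimatroid E)

/-- The rank `r(𝒞)` of the semimatroid: the common rank of the maximal central sets. -/
def rank : ℕ := S.C.sup S.r

/-- The closure of a central set `X`:
`cl X = {e ∈ E : X ∪ {e} ∈ 𝒞 and r (X ∪ {e}) = r X}`. -/
def cl (X : Finset E) : Finset E :=
  Finset.univ.filter fun e => insert e X ∈ S.C ∧ S.r (insert e X) = S.r X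

/-- The flats of the semimatroid: central sets `X` with `cl X = X`. -/
def flats : Finset (Finset E) := S.C.filter fun X => S.cl X = X

/-- The characteristic polynomial `χ(𝒞;t) = Σ_{X ∈ 𝒞} (−1)^{|X|} t^{r(𝒞)−r(X)}`. -/
noncomputable def charPoly : Polynomial ℤ :=
  ∑ A ∈ S.C, (-1 : Polynomial ℤ) ^ A.card * Polynomial.X ^ (S.rank - S.r A)

end Semimatroid

/-!
On a Boolean interval `[X, Y]` the sum of the signs `(-1) ^ |Z \ X|` is `1` if `X = Y` and `0`
otherwise. For `Y` a flat, every `Z` in `[X, Y]` is central and its closure is a flat of `[X, Y]`.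
Grouping the signs according to the closure therefore gives a function on the flats above `X` that
satisfies the defining recursion of the Möbius function.
-/

theorem eq_of_sum_filter_le_eq {α M : Type*} [PartialOrder α] [DecidableLE α]
    [AddCommMonoid M] [IsRightCancelAdd M] {s : Finset α} {f g : α → M}
    (h : ∀ b ∈ s, ∑ a ∈ s with a ≤ b, f a = ∑ a ∈ s with a ≤ b, g a) :
    ∀ b ∈ s, f b = g b := by
  classical
  intro b hb
  refine (s.wellFoundedOn (r := (· < ·))).induction (P := fun b => f b = g b) hb fun b hb ih => ?_
  have hmem : b ∈ s.filter (· ≤ b) := Finset.mem_filter.2 ⟨hb, le_rfl⟩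
  have hbelow : ∑ a ∈ (s.filter (· ≤ b)).erase b, f a =
      ∑ a ∈ (s.filter (· ≤ b)).erase b, g a := by
    refine Finset.sum_congr rfl fun a ha => ?_
    obtain ⟨hab, has, hle⟩ : a ≠ b ∧ a ∈ s ∧ a ≤ b := by
      simpa only [Finset.mem_erase, Finset.mem_filter] using ha
    exact ih a has (hle.lt_of_ne hab)
  have hsum := h b hb
  rw [← Finset.add_sum_erase _ f hmem, ← Finset.add_sum_erase _ g hmem, hbelow] at hsum
  exact add_right_cancel hsum

theorem sum_Icc_neg_one_pow_card_sdiff {α : Type*} [DecidableEq α] (X Y : Finset α) :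
    ∑ Z ∈ Finset.Icc X Y, (-1 : ℤ) ^ (Z \ X).card = if X = Y then 1 else 0 := by
  by_cases hXY : X ⊆ Y
  · have hdisj : ∀ A ∈ (Y \ X).powerset, Disjoint A X := fun A hA =>
      Finset.disjoint_of_subset_left (Finset.mem_powerset.1 hA) Finset.sdiff_disjoint
    have hinj : Set.InjOn (X ∪ ·) ((Y \ X).powerset : Set (Finset α)) := by
      intro A hA B hB (hAB : X ∪ A = X ∪ B)
      rw [← Finset.union_sdiff_cancel_left (hdisj A hA).symm, hAB,
        Finset.union_sdiff_cancel_left (hdisj B hB).symm]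
    have hempty : Y \ X = ∅ ↔ X = Y := by
      rw [Finset.sdiff_eq_empty_iff_subset]
      exact ⟨hXY.antisymm, fun h => h.ge⟩
    calc ∑ Z ∈ Finset.Icc X Y, (-1 : ℤ) ^ (Z \ X).card
        = ∑ A ∈ (Y \ X).powerset, (-1 : ℤ) ^ ((X ∪ A) \ X).card := by
          rw [Finset.Icc_eq_image_powerset hXY, Finset.sum_image hinj]
      _ = ∑ A ∈ (Y \ X).powerset, (-1 : ℤ) ^ A.card :=
          Finset.sum_congr rfl fun A hA => by
            rw [Finset.union_sdiff_cancel_left (hdisj A hA).symm]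
      _ = if X = Y then 1 else 0 := by
          simp only [Finset.sum_powerset_neg_one_pow_card, hempty]
  · rw [Finset.Icc_eq_empty hXY, Finset.sum_empty, if_neg fun h => hXY h.le]

namespace Semimatroid

variable {E : Type*} [DecidableEq E] [Fintype E] {S : Semimatroid E} {A X Y : Finset E} {e : E}

theorem mem_cl : e ∈ S.cl X ↔ insert e X ∈ S.C ∧ S.r (insert e X) = S.r X := by
  simp only [cl, Finset.mem_filter, Finset.mem_univ, true_and]

theorem mem_flats : X ∈ S.flats ↔ X ∈ S.C ∧ S.cl X = X :=
  Finset.mem_filter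

theorem subset_cl (hX : X ∈ S.C) : X ⊆ S.cl X := fun e he =>
  mem_cl.2 <| by rw [Finset.insert_eq_of_mem he]; exact ⟨hX, rfl⟩

theorem cl_mono (hY : Y ∈ S.C) (hXY : X ⊆ Y) : S.cl X ⊆ S.cl Y := by
  intro e he
  obtain ⟨heX, hr⟩ := mem_cl.1 he
  have hinter : insert e X ∩ Y ∈ S.C := S.mem_of_subset hY Finset.inter_subset_right
  have hr_inter : S.r (insert e X) = S.r (insert e X ∩ Y) := by
    refine le_antisymm ?_ (S.r_mono hinter heX Finset.inter_subset_left)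
    rw [hr]
    exact S.r_mono (S.mem_of_subset hY hXY) hinter
      (Finset.subset_inter (Finset.subset_insert e X) hXY)
  have hunion : insert e X ∪ Y = insert e Y := by
    rw [Finset.insert_union, Finset.union_eq_right.2 hXY]
  have heY : insert e Y ∈ S.C := hunion ▸ S.union_mem heX hY hr_inter
  have hsub := S.submodular heX hY (hunion ▸ heY)
  have hle := S.r_mono hY heY (Finset.subset_insert e Y)
  rw [hunion] at hsub
  exact mem_cl.2 ⟨heY, by omega⟩

theorem union_mem_and_r_union_eq (hX : X ∈ S.C) (hA : A ⊆ S.cl X) :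
    X ∪ A ∈ S.C ∧ S.r (X ∪ A) = S.r X := by
  induction A using Finset.induction_on with
  | empty => simpa only [Finset.union_empty, and_true] using hX
  | insert e A _ ih =>
    obtain ⟨heX, hAX⟩ := Finset.insert_subset_iff.1 hA
    obtain ⟨hunion, hr⟩ := ih hAX
    obtain ⟨hmem, hr_insert⟩ := mem_cl.1 (cl_mono hunion Finset.subset_union_left heX)
    rw [Finset.union_insert]
    exact ⟨hmem, hr_insert.trans hr⟩

theorem cl_mem (hX : X ∈ S.C) : S.cl X ∈ S.C := by
  simpa only [Finset.union_eq_right.2 (subset_cl hX)] using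
    (union_mem_and_r_union_eq hX (Finset.Subset.refl (S.cl X))).1

theorem r_cl (hX : X ∈ S.C) : S.r (S.cl X) = S.r X := by
  simpa only [Finset.union_eq_right.2 (subset_cl hX)] using
    (union_mem_and_r_union_eq hX (Finset.Subset.refl (S.cl X))).2

theorem cl_cl (hX : X ∈ S.C) : S.cl (S.cl X) = S.cl X := by
  refine Finset.Subset.antisymm (fun e he => ?_) (subset_cl (cl_mem hX))
  obtain ⟨he_cl, hr⟩ := mem_cl.1 he
  have hsub : insert e X ⊆ insert e (S.cl X) := Finset.insert_subset_insert e (subset_cl hX)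
  have heX : insert e X ∈ S.C := S.mem_of_subset he_cl hsub
  refine mem_cl.2 ⟨heX, le_antisymm ?_ (S.r_mono hX heX (Finset.subset_insert e X))⟩
  calc S.r (insert e X) ≤ S.r (insert e (S.cl X)) := S.r_mono heX he_cl hsub
    _ = S.r X := hr.trans (r_cl hX)

theorem cl_mem_flats (hX : X ∈ S.C) : S.cl X ∈ S.flats :=
  mem_flats.2 ⟨cl_mem hX, cl_cl hX⟩

theorem cl_subset_of_mem_flats (hY : Y ∈ S.flats) (hXY : X ⊆ Y) : S.cl X ⊆ Y := by
  obtain ⟨hYC, hcl⟩ := mem_flats.1 hY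
  exact (cl_mono hYC hXY).trans_eq hcl

theorem filter_Icc_cl_eq (X : Finset E) {F : Finset E} (hY : Y ∈ S.C) (hFY : F ⊆ Y) :
    {Z ∈ Finset.Icc X Y | S.cl Z = F} = {Z ∈ S.C | X ⊆ Z ∧ Z ⊆ F ∧ S.cl Z = F} := by
  ext Z
  simp only [Finset.mem_filter, Finset.mem_Icc]
  constructor
  · rintro ⟨⟨hXZ, hZY⟩, hcl⟩
    have hZ : Z ∈ S.C := S.mem_of_subset hY hZY
    exact ⟨hZ, hXZ, (subset_cl hZ).trans_eq hcl, hcl⟩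
  · rintro ⟨-, hXZ, hZF, hcl⟩
    exact ⟨⟨hXZ, hZF.trans hFY⟩, hcl⟩

theorem sum_flats_sum_cl_eq {M : Type*} [AddCommMonoid M] (X : Finset E) (hY : Y ∈ S.flats)
    (f : Finset E → M) :
    ∑ F ∈ S.flats with X ⊆ F ∧ F ⊆ Y, ∑ Z ∈ S.C with X ⊆ Z ∧ Z ⊆ F ∧ S.cl Z = F, f Z =
      ∑ Z ∈ Finset.Icc X Y, f Z := by
  have hYC : Y ∈ S.C := (mem_flats.1 hY).1
  have hmaps : ∀ Z ∈ Finset.Icc X Y, S.cl Z ∈ S.flats.filter fun F => X ⊆ F ∧ F ⊆ Y := by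
    intro Z hZ
    obtain ⟨hXZ, hZY⟩ := Finset.mem_Icc.1 hZ
    have hZC : Z ∈ S.C := S.mem_of_subset hYC hZY
    exact Finset.mem_filter.2 ⟨cl_mem_flats hZC, hXZ.trans (subset_cl hZC),
      cl_subset_of_mem_flats hY hZY⟩
  rw [← Finset.sum_fiberwise_of_maps_to hmaps]
  refine Finset.sum_congr rfl fun F hF => ?_
  rw [filter_Icc_cl_eq X hYC (Finset.mem_filter.1 hF).2.2]

end Semimatroid

open Finset in
/-- For flats `X ⊆ Y` of a semimatroid `𝒞`, the Möbius function of the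
poset `ℒ(𝒞)` of flats satisfies `μ(X,Y) = Σ_{Z ∈ 𝒞, X ⊆ Z ⊆ Y, cl Z = Y} (−1)^{|Z \ X|}`. -/
theorem Semimatroid.moebius_flats_eq
    {E : Type*} [DecidableEq E] [Fintype E] (S : Semimatroid E)
    (μ : Finset E → Finset E → ℤ)
    (hμ_refl : ∀ Z ∈ S.flats, μ Z Z = 1)
    (hμ_rec : ∀ X ∈ S.flats, ∀ Y ∈ S.flats, X ⊆ Y → X ≠ Y →
      ∑ Z ∈ S.flats.filter (fun Z => X ⊆ Z ∧ Z ⊆ Y), μ X Z = 0)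
    (X Y : Finset E) (hX : X ∈ S.flats) (hY : Y ∈ S.flats) (hXY : X ⊆ Y) :
    μ X Y = ∑ Z ∈ S.C.filter (fun Z => X ⊆ Z ∧ Z ⊆ Y ∧ S.cl Z = Y),
      (-1 : ℤ) ^ (Z \ X).card := by
  have hμ_sum : ∀ F ∈ S.flats, X ⊆ F →
      ∑ Z ∈ S.flats with X ⊆ Z ∧ Z ⊆ F, μ X Z = if X = F then 1 else 0 := by
    intro F hF hXF
    split_ifs with hXF_eq
    · subst hXF_eq
      have hsingle : S.flats.filter (fun Z => X ⊆ Z ∧ Z ⊆ X) = {X} := by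
        simp only [← Subset.antisymm_iff, filter_eq, if_pos hX]
      rw [hsingle, sum_singleton, hμ_refl X hX]
    · exact hμ_rec X hX F hF hXF hXF_eq
  refine eq_of_sum_filter_le_eq (s := S.flats.filter (X ⊆ ·)) (f := μ X)
    (g := fun F => ∑ Z ∈ S.C with X ⊆ Z ∧ Z ⊆ F ∧ S.cl Z = F, (-1 : ℤ) ^ (Z \ X).card)
    (fun F hF => ?_) Y (mem_filter.2 ⟨hY, hXY⟩)
  obtain ⟨hF_flat, hXF⟩ := mem_filter.1 hF
  simp only [filter_filter]
  rw [hμ_sum F hF_flat hXF, sum_flats_sum_cl_eq X hF_flat, sum_Icc_neg_one_pow_card_sdiff]
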